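/- Fix a prime p and natural numbers s and t. If there exists a surjective ring homomorphism φ from ℤ_p[[X₁,…,X_s]] (MvPowerSeries (Fin s) ℤ_p) onto ℤ_p[[X₁,…,X_t]] that is not injective, then t < s. -/

import Mathlib

/-- A surjective endomorphism of a commutative Noetherian ring is injective. -/
theorem RingHom.injective_of_surjective_of_isNoetherianRing {R : Type*} [CommRing R]
    [IsNoetherianRing R] (f : R →+* R) (hf : Function.Surjective f) :
    Function.Injective f := by
  let K : ℕ →o Ideal R :=
    { toFun := fun n => RingHom.ker (f ^ n)
      monotone' := monotone_nat_of_le_succ fun n x hx => by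
        rw [RingHom.mem_ker] at hx ⊢
        rw [pow_succ', RingHom.mul_def, RingHom.comp_apply, hx, map_zero] }
  obtain ⟨n, hn⟩ := monotone_stabilizes_iff_noetherian.mpr ‹IsNoetherianRing R› K
  rw [injective_iff_map_eq_zero]
  intro x hx
  obtain ⟨y, rfl⟩ : ∃ y, (f ^ n) y = x := by
    rw [RingHom.coe_pow]
    exact hf.iterate n x
  have hy : y ∈ K (n + 1) := by
    change (f ^ (n + 1)) y = 0
    rw [pow_succ', RingHom.mul_def, RingHom.comp_apply, hx]
  rw [← hn (n + 1) n.le_succ] at hy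
  exact hy

/-- If there is a surjective, non-injective ring homomorphism from `ℤ_p[[X₁,…,X_s]]`
onto `ℤ_p[[X₁,…,X_t]]`, then `t < s`. -/
theorem lt_of_surjective_not_injective_powerSeries (p : ℕ) [Fact p.Prime] (s t : ℕ)
    (φ : MvPowerSeries (Fin s) ℤ_[p] →+* MvPowerSeries (Fin t) ℤ_[p])
    (hsurj : Function.Surjective φ) (hinj : ¬ Function.Injective φ) : t < s := by
  by_contra! hst
  let e : Fin s ↪ Fin t := Fin.castLEEmb hst
  let π : MvPowerSeries (Fin t) ℤ_[p] →+* MvPowerSeries (Fin s) ℤ_[p] :=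
    (MvPowerSeries.killCompl e).toRingHom
  have hπ : Function.Surjective π := fun q =>
    ⟨MvPowerSeries.rename e q, MvPowerSeries.killCompl_rename_app q⟩
  have h : Function.Injective (π ∘ φ) :=
    (π.comp φ).injective_of_surjective_of_isNoetherianRing (hπ.comp hsurj)
  exact hinj h.of_comp
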